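/- Let F ∈ S[x]^p be positive definite on the compact set {x : H_j(x) ⪰ 0, j = 1,…,t} and assume the matrix quadratic module Q^p(H₁,…,H_t) is Archimedean. Then F(x) = Σ₀(x) + Σ_{j=1}^t ⟨Σ_j(x), H_j(x)⟩_p for SOS matrices Σ₀ ∈ S[x]^p, Σ_j ∈ S[x]^{p r_j}. (Multi-constraint Scherer–Hol Positivstellensatz, derived from the single-constraint case via block-diagonal aggregation.) -/

import Mathlib

open MeasureTheory MvPolynomial Matrix Finset

noncomputable section

/-- A polynomial matrix is an SOS matrix if it factors as `Tᵀ * T`. -/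
def IsSOSMatrix {σ : Type*} {ι : Type*} [Fintype ι]
    (M : Matrix ι ι (MvPolynomial σ ℝ)) : Prop :=
  ∃ (l : ℕ) (T : Matrix (Fin l) ι (MvPolynomial σ ℝ)), M = Tᵀ * T

/-- A polynomial is a sum of squares. -/
def IsSOSPoly {σ : Type*} (f : MvPolynomial σ ℝ) : Prop :=
  ∃ (l : ℕ) (g : Fin l → MvPolynomial σ ℝ), f = ∑ i, (g i) ^ 2

/-- The block-trace bilinear map `⟨A,B⟩_p = Tr_p (Aᵀ (I_p ⊗ B))`. -/
def lram {R : Type*} [CommSemiring R] {ιp ιq : Type*} [Fintype ιq]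
    (A : Matrix (ιp × ιq) (ιp × ιq) R) (B : Matrix ιq ιq R) :
    Matrix ιp ιp R :=
  Matrix.of fun i j => ∑ a : ιq, ∑ c : ιq, A (j, c) (i, a) * B c a

/-- The `x`-part of an exponent in the variables `x ⊕ y`. -/
def xPart {n m : ℕ} (d : (Fin n ⊕ Fin m) →₀ ℕ) : Fin n →₀ ℕ :=
  Finsupp.comapDomain Sum.inl d Sum.inl_injective.injOn

/-- Integrate out the `y`-variables of a polynomial in `(x, y)` against the measure `ν`:
`∫_Y Σ_β H_β(x) y^β dν := Σ_β H_β(x) ∫_Y y^β dν`. -/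
def integY {n m : ℕ} (ν : Measure (Fin m → ℝ))
    (q : MvPolynomial (Fin n ⊕ Fin m) ℝ) : MvPolynomial (Fin n) ℝ :=
  ∑ d ∈ q.support, MvPolynomial.monomial (xPart d)
    (q.coeff d * ∫ y, ∏ j : Fin m, (y j) ^ (d (Sum.inr j)) ∂ν)

/-- All polynomial moments of `ν` are finite. -/
def momentsFinite {m : ℕ} (ν : Measure (Fin m → ℝ)) : Prop :=
  ∀ h : MvPolynomial (Fin m) ℝ, Integrable (fun y => |MvPolynomial.eval y h|) ν

/-- `ν` has support exactly `Y`. -/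
def hasSupport {m : ℕ} (ν : Measure (Fin m → ℝ)) (Y : Set (Fin m → ℝ)) : Prop :=
  ν Yᶜ = 0 ∧ ∀ U : Set (Fin m → ℝ), IsOpen U → (U ∩ Y).Nonempty → 0 < ν U

/-- The multivariate Carleman condition on `ν`. -/
def Carleman {m : ℕ} (ν : Measure (Fin m → ℝ)) : Prop :=
  ∀ j : Fin m, ¬ Summable (fun d : ℕ =>
    (∫ y, (y j) ^ (2 * (d + 1)) ∂ν) ^ (-(1 : ℝ) / (2 * (d + 1))))

/-- Evaluate a polynomial matrix at a point. -/
def evalMat {σ : Type*} {ι : Type*} (x : σ → ℝ)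
    (M : Matrix ι ι (MvPolynomial σ ℝ)) : Matrix ι ι ℝ :=
  M.map (MvPolynomial.eval x)

/-- The spectral (L²-operator) norm of a real matrix. -/
def specNorm {ι : Type*} [Fintype ι] [DecidableEq ι] (A : Matrix ι ι ℝ) : ℝ :=
  ‖(Matrix.toEuclideanLin A).toContinuousLinearMap‖

/-- Degree of a polynomial matrix. -/
def matDeg {ι σ : Type*} [Fintype ι] (M : Matrix ι ι (MvPolynomial σ ℝ)) : ℕ :=
  Finset.univ.sup fun i => Finset.univ.sup fun j => (M i j).totalDegree

/-- Degree in `x` of a polynomial in `(x,y)`. -/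
def degX {n m : ℕ} (q : MvPolynomial (Fin n ⊕ Fin m) ℝ) : ℕ :=
  q.support.sup fun d => ∑ i : Fin n, d (Sum.inl i)

/-- Degree in `y` of a polynomial in `(x,y)`. -/
def degY {n m : ℕ} (q : MvPolynomial (Fin n ⊕ Fin m) ℝ) : ℕ :=
  q.support.sup fun d => ∑ j : Fin m, d (Sum.inr j)

def matDegX {ι : Type*} {n m : ℕ} [Fintype ι]
    (M : Matrix ι ι (MvPolynomial (Fin n ⊕ Fin m) ℝ)) : ℕ :=
  Finset.univ.sup fun i => Finset.univ.sup fun j => degX (M i j)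

def matDegY {ι : Type*} {n m : ℕ} [Fintype ι]
    (M : Matrix ι ι (MvPolynomial (Fin n ⊕ Fin m) ℝ)) : ℕ :=
  Finset.univ.sup fun i => Finset.univ.sup fun j => degY (M i j)

/-- Homogeneity in `x` of a polynomial in `(x,y)`. -/
def IsHomogeneousX {n m : ℕ} (q : MvPolynomial (Fin n ⊕ Fin m) ℝ) (k : ℕ) : Prop :=
  ∀ d ∈ q.support, ∑ i : Fin n, d (Sum.inl i) = k

/-- Positive semidefiniteness of the full (infinite) moment matrix `M(S)`:
every finite principal block submatrix is PSD. -/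
def MomentPSD {n p : ℕ} (S : (Fin n →₀ ℕ) → Matrix (Fin p) (Fin p) ℝ) : Prop :=
  ∀ (N : ℕ) (idx : Fin N → (Fin n →₀ ℕ)),
    (Matrix.of fun a b : Fin N × Fin p => S (idx a.1 + idx b.1) a.2 b.2).PosSemidef

/-- Exponents of degree at most `d` in `n` variables. -/
def Expo (n d : ℕ) := {a : Fin n → Fin (d + 1) // ∑ i, (a i : ℕ) ≤ d}

instance (n d : ℕ) : Fintype (Expo n d) := by unfold Expo; infer_instance
instance (n d : ℕ) : DecidableEq (Expo n d) := by unfold Expo; infer_instance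

def expF {n d : ℕ} (a : Fin n → Fin (d + 1)) : Fin n →₀ ℕ :=
  Finsupp.equivFunOnFinite.symm (fun i => (a i : ℕ))

/-- Truncated moment matrix `M_d(S)`. -/
def momentMat {n p : ℕ} (S : (Fin n →₀ ℕ) → Matrix (Fin p) (Fin p) ℝ) (d : ℕ) :
    Matrix (Expo n d × Fin p) (Expo n d × Fin p) ℝ :=
  Matrix.of fun a b => S (expF a.1.1 + expF b.1.1) a.2 b.2

/-- Truncated localizing matrix `M^ν_{d,k}(G S)`. -/
def locMat {n m p q : ℕ} (ν : Measure (Fin m → ℝ))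
    (G : Matrix (Fin q) (Fin q) (MvPolynomial (Fin n ⊕ Fin m) ℝ))
    (S : (Fin n →₀ ℕ) → Matrix (Fin p) (Fin p) ℝ) (d k : ℕ) :
    Matrix ((Expo n d × Expo m k) × (Fin p × Fin q))
           ((Expo n d × Expo m k) × (Fin p × Fin q)) ℝ :=
  Matrix.of fun r c =>
    ∑ e ∈ (G r.2.2 c.2.2).support,
      (∫ y, ∏ j : Fin m, (y j) ^ (e (Sum.inr j) + (r.1.2.1 j : ℕ) + (c.1.2.1 j : ℕ)) ∂ν) *
      ((G r.2.2 c.2.2).coeff e *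
        S (expF r.1.1.1 + expF c.1.1.1 + xPart e) r.2.1 c.2.1)

/-- The Riesz functional `L_S(H) = Σ_α tr(H_α S_α)`. -/
def RieszL {n p : ℕ} (S : (Fin n →₀ ℕ) → Matrix (Fin p) (Fin p) ℝ)
    (H : Matrix (Fin p) (Fin p) (MvPolynomial (Fin n) ℝ)) : ℝ :=
  ∑ i, ∑ j, ∑ α ∈ (H i j).support, (H i j).coeff α * S α j i

end

/-!
The matrices whose symmetric part lies in the quadratic module form a convex cone for which, by the
Archimedean hypothesis, the identity is an order unit. If `F` were not in this cone, Riesz extension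
and Krein–Milman would give a pure state `L` with `L F ≤ 0`. The cone is closed under multiplication
by squares of scalars, and this forces the pure state to be multiplicative over the ring of scalars:
`L (a • G) = φ a * L G` for a character `φ`, which for polynomials is evaluation at a point `x`. The
point satisfies the constraints because `φ` is nonnegative on the scalar quadratic module, and `L`
depends only on `G(x)`, through a functional that is nonnegative on positive semidefinite real
matrices. Since `F(x)` is positive definite, `L F > 0`, a contradiction. All the constraints are
treated at once, without aggregating them into a block-diagonal matrix.
-/

theorem apply_one_le_of_sq_le_mul {c : ℕ → ℝ} {K N : ℝ} (hK : 0 < K) (hc : ∀ m, 0 ≤ c m)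
    (hlog : ∀ m, c (m + 1) ^ 2 ≤ c m * c (m + 2)) (hbd : ∀ m, c m ≤ N * K ^ m) :
    c 1 ≤ K * c 0 := by
  -- The ratios `c (m + 1) / c m` increase, so a first ratio above `K` beats the growth bound.
  by_contra! hlt
  have h1 : 0 < c 1 := (mul_nonneg hK.le (hc 0)).trans_lt hlt
  have h0 : 0 < c 0 :=
    pos_of_mul_pos_left ((pow_pos h1 2).trans_le (hlog 0)) (hc 2)
  set q := c 1 / c 0
  have hKq : K < q := (lt_div_iff₀ h0).2 hlt
  have hratio (m : ℕ) : 0 < c m ∧ q * c m ≤ c (m + 1) := by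
    induction m with
    | zero => exact ⟨h0, (div_mul_cancel₀ _ h0.ne').le⟩
    | succ m ih =>
      have hpos : 0 < c (m + 1) := (mul_pos (hK.trans hKq) ih.1).trans_le ih.2
      refine ⟨hpos, le_of_mul_le_mul_left ?_ ih.1⟩
      calc c m * (q * c (m + 1)) = q * c m * c (m + 1) := by ring
        _ ≤ c (m + 1) * c (m + 1) := by gcongr; exact ih.2
        _ ≤ c m * c (m + 2) := by rw [← sq]; exact hlog m
  obtain ⟨m, hm⟩ := pow_unbounded_of_one_lt (N / c 0) ((one_lt_div hK).2 hKq)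
  rw [div_pow, div_lt_div_iff₀ h0 (pow_pos hK m)] at hm
  have hgrow : q ^ m * c 0 ≤ c m := geom_le (hK.trans hKq).le m fun k _ => (hratio k).2
  linarith [hbd m]

theorem exists_mem_extremePoints_le {E : Type*} [AddCommGroup E] [Module ℝ E] [TopologicalSpace E]
    [T2Space E] [IsTopologicalAddGroup E] [ContinuousSMul ℝ E] [LocallyConvexSpace ℝ E]
    {s : Set E} (hs : IsCompact s) (l : E →L[ℝ] ℝ) {x : E} (hx : x ∈ s) :
    ∃ y ∈ s.extremePoints ℝ, l y ≤ l x := by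
  have hexp : IsExposed ℝ s ((-l).toExposed s) := ContinuousLinearMap.toExposed.isExposed
  obtain ⟨z, hz, hmin⟩ := hs.exists_isMinOn ⟨x, hx⟩ l.continuous.continuousOn
  obtain ⟨y, hy⟩ := (hexp.isCompact hs).extremePoints_nonempty
    ⟨z, hz, fun w hw => neg_le_neg (hmin hw)⟩
  exact ⟨y, hexp.isExtreme.extremePoints_subset_extremePoints hy, neg_le_neg_iff.1 (hy.1.2 x hx)⟩

section States

variable {V : Type*} [AddCommGroup V] [Module ℝ V]

/-- `u` is an order unit of the cone `M`: it lies in `M`, and every vector is moved into `M` by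
adding a real multiple of `u`. -/
def IsOrderUnit (M : PointedCone ℝ V) (u : V) : Prop :=
  u ∈ M ∧ ∀ v, ∃ N : ℝ, N • u + v ∈ M

/-- The states of `(M, u)`: the linear functionals that are nonnegative on the cone `M` and take
the value `1` at `u`. The extreme points of this set are the pure states. -/
def stateSet (M : PointedCone ℝ V) (u : V) : Set (Module.Dual ℝ V) :=
  {L | (∀ m ∈ M, 0 ≤ L m) ∧ L u = 1}

variable {M : PointedCone ℝ V} {u f : V} {L : Module.Dual ℝ V}

theorem IsOrderUnit.exists_pos_smul_sub_mem (hu : IsOrderUnit M u) (v : V) :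
    ∃ K : ℝ, 0 < K ∧ K • u - v ∈ M := by
  obtain ⟨N, hN⟩ := hu.2 (-v)
  refine ⟨|N| + 1, by positivity, ?_⟩
  convert M.add_mem hN (M.smul_mem (r := |N| + 1 - N) (by linarith [le_abs_self N]) hu.1) using 1
  module

theorem IsOrderUnit.mem_of_neg_mem (hu : IsOrderUnit M u) (h : -u ∈ M) (v : V) : v ∈ M := by
  obtain ⟨K, hK, hKv⟩ := hu.exists_pos_smul_sub_mem (-v)
  convert M.add_mem hKv (M.smul_mem hK.le h) using 1
  module

theorem IsOrderUnit.mono {M' : PointedCone ℝ V} (hu : IsOrderUnit M u) (h : M ≤ M') :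
    IsOrderUnit M' u :=
  ⟨h hu.1, fun v => (hu.2 v).imp fun _ hN => h hN⟩

theorem stateSet_nonempty (hu : IsOrderUnit M u) (hneg : -u ∉ M) : (stateSet M u).Nonempty := by
  have hu0 : u ≠ 0 := by
    rintro rfl
    exact hneg (by simp)
  obtain ⟨L, hLu, hLM⟩ := riesz_extension M (LinearPMap.mkSpanSingleton u (1 : ℝ) hu0)
    (by
      rintro ⟨x, hx⟩ hxM
      obtain ⟨c, rfl⟩ := Submodule.mem_span_singleton.1 hx
      rw [LinearPMap.mkSpanSingleton'_apply, RingHom.id_apply, smul_eq_mul, mul_one]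
      by_contra! hc
      refine hneg ?_
      convert M.smul_mem (inv_nonneg.2 (neg_nonneg.2 hc.le)) hxM using 1
      rw [smul_smul, inv_neg, neg_mul, inv_mul_cancel₀ hc.ne, neg_one_smul])
    fun v => (hu.2 v).imp' (fun N => ⟨N • u, Submodule.mem_span_singleton.2 ⟨N, rfl⟩⟩) fun _ h => h
  refine ⟨L, hLM, (hLu ⟨u, Submodule.mem_span_singleton_self u⟩).trans ?_⟩
  exact LinearPMap.mkSpanSingleton_apply ℝ ℝ hu0 1

theorem exists_mem_stateSet_apply_nonpos (hu : IsOrderUnit M u) (hf : f ∉ M) :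
    ∃ L ∈ stateSet M u, L f ≤ 0 := by
  have hneg : -u ∉ M ⊔ PointedCone.hull ℝ {-f} := by
    intro h
    obtain ⟨m, hm, z, hz, hmz⟩ := Submodule.mem_sup.1 h
    obtain ⟨⟨s, hs⟩, rfl⟩ := Submodule.mem_span_singleton.1 hz
    replace hmz : m + s • -f = -u := hmz
    rcases hs.eq_or_lt with rfl | hs
    · rw [zero_smul, add_zero] at hmz
      exact hf (hu.mem_of_neg_mem (hmz ▸ hm) f)
    · have hsf : s • f = m + u := by
        rw [← neg_eq_iff_eq_neg.2 hmz]
        module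
      exact hf ((M.smul_mem_iff hs).1 (hsf ▸ M.add_mem hm hu.1))
  obtain ⟨L, hL, hLu⟩ := stateSet_nonempty (hu.mono le_sup_left) hneg
  refine ⟨L, ⟨fun m hm => hL m (Submodule.mem_sup_left hm), hLu⟩, ?_⟩
  simpa using hL (-f) (Submodule.mem_sup_right (Submodule.subset_span rfl))

theorem isCompact_coe_image_stateSet (hu : IsOrderUnit M u) :
    IsCompact ((fun L : Module.Dual ℝ V => (L : V → ℝ)) '' stateSet M u) := by
  choose N hN using hu.2
  refine (isCompact_univ_pi fun v => isCompact_Icc (a := -N v) (b := N (-v))).of_isClosed_subset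
    ?_ ?_
  · have hclosed : IsClosed (Set.range (fun L : Module.Dual ℝ V => (L : V → ℝ)) ∩
        ((⋂ m ∈ M, {g | 0 ≤ g m}) ∩ {g | g u = 1})) :=
      (LinearMap.isClosed_range_coe V ℝ (RingHom.id ℝ)).inter
        ((isClosed_biInter fun m _ => isClosed_le continuous_const (continuous_apply m)).inter
          (isClosed_eq (continuous_apply u) continuous_const))
    convert hclosed using 1
    ext g
    simp only [stateSet, Set.mem_image, Set.mem_inter_iff, Set.mem_range, Set.mem_iInter]
    constructor
    · rintro ⟨L, hL, rfl⟩
      exact ⟨⟨L, rfl⟩, hL⟩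
    · rintro ⟨⟨L, rfl⟩, hL⟩
      exact ⟨L, hL, rfl⟩
  · rintro _ ⟨L, ⟨hLM, hLu⟩, rfl⟩ v -
    have hlower := hLM _ (hN v)
    have hupper := hLM _ (hN (-v))
    simp only [map_add, map_smul, map_neg, hLu, smul_eq_mul, mul_one] at hlower hupper
    exact ⟨by linarith, by linarith⟩

theorem exists_mem_extremePoints_stateSet_apply_nonpos (hu : IsOrderUnit M u) (hf : f ∉ M) :
    ∃ L ∈ (stateSet M u).extremePoints ℝ, L f ≤ 0 := by
  obtain ⟨L₀, hL₀, hL₀f⟩ := exists_mem_stateSet_apply_nonpos hu hf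
  obtain ⟨_, ⟨⟨L, hL, rfl⟩, hext⟩, hle⟩ := exists_mem_extremePoints_le
    (isCompact_coe_image_stateSet hu) (ContinuousLinearMap.proj f) (Set.mem_image_of_mem _ hL₀)
  refine ⟨L, ⟨hL, fun A hA B hB => ?_⟩, hle.trans hL₀f⟩
  rintro ⟨a, b, ha, hb, hab, rfl⟩
  exact DFunLike.coe_injective (hext (Set.mem_image_of_mem _ hA) (Set.mem_image_of_mem _ hB)
    ⟨a, b, ha, hb, hab, rfl⟩)

theorem inv_apply_smul_mem_stateSet (hL : ∀ m ∈ M, 0 ≤ L m) (hLu : 0 < L u) :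
    (L u)⁻¹ • L ∈ stateSet M u :=
  ⟨fun m hm => mul_nonneg (inv_nonneg.2 hLu.le) (hL m hm), inv_mul_cancel₀ hLu.ne'⟩

theorem eq_apply_smul_of_add_eq_smul (hL : L ∈ (stateSet M u).extremePoints ℝ)
    {A B : Module.Dual ℝ V} (hA : ∀ m ∈ M, 0 ≤ A m) (hB : ∀ m ∈ M, 0 ≤ B m)
    (hAu : 0 < A u) (hBu : 0 < B u) {c : ℝ} (hAB : A + B = c • L) : A = A u • L := by
  have hc : A u + B u = c := by simpa [hL.1.2] using LinearMap.congr_fun hAB u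
  have hc0 : 0 < c := hc ▸ add_pos hAu hBu
  have hseg : L ∈ openSegment ℝ ((A u)⁻¹ • A) ((B u)⁻¹ • B) := by
    refine ⟨A u / c, B u / c, by positivity, by positivity, ?_, ?_⟩
    · rw [← add_div, hc, div_self hc0.ne']
    · rw [smul_smul, smul_smul, div_mul_eq_mul_div, div_mul_eq_mul_div, mul_inv_cancel₀ hAu.ne',
        mul_inv_cancel₀ hBu.ne', ← smul_add, hAB, smul_smul, one_div_mul_cancel hc0.ne', one_smul]
  rw [← hL.2 (inv_apply_smul_mem_stateSet hA hAu) (inv_apply_smul_mem_stateSet hB hBu) hseg,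
    smul_inv_smul₀ hAu.ne']

theorem eq_apply_smul_of_le (hu : u ∈ M) (hL : L ∈ (stateSet M u).extremePoints ℝ)
    {A : Module.Dual ℝ V} {K : ℝ} (hA : ∀ m ∈ M, 0 ≤ A m) (hAL : ∀ m ∈ M, A m ≤ K * L m) :
    A = A u • L := by
  have hLM := hL.1.1
  have hLu : L u = 1 := hL.1.2
  have hsum : A + L = (A + L) u • L := by
    refine eq_apply_smul_of_add_eq_smul hL (B := (K + 1) • L - A) (c := K + 2)
      (fun m hm => add_nonneg (hA m hm) (hLM m hm)) (fun m hm => ?_) ?_ ?_ (by module)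
    · simp only [LinearMap.sub_apply, LinearMap.smul_apply, smul_eq_mul]
      linarith [hAL m hm, hLM m hm]
    · rw [LinearMap.add_apply, hLu]
      linarith [hA u hu]
    · simp only [LinearMap.sub_apply, LinearMap.smul_apply, smul_eq_mul, hLu]
      linarith [hLu ▸ hAL u hu]
  rwa [LinearMap.add_apply, hLu, add_smul, one_smul, add_left_inj] at hsum

end States

section SquareClosed

variable {R V : Type*} [CommRing R] [Algebra ℝ R] [AddCommGroup V] [Module ℝ V] [Module R V]
  [IsScalarTower ℝ R V]

theorem nonneg_smul_mem_of_sq_smul_mem {S : AddSubmonoid V}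
    (hsq : ∀ a : R, ∀ v ∈ S, a ^ 2 • v ∈ S) {c : ℝ} (hc : 0 ≤ c) {v : V} (hv : v ∈ S) :
    c • v ∈ S := by
  simpa only [← map_pow, Real.sq_sqrt hc, algebraMap_smul] using hsq (algebraMap ℝ R √c) v hv

theorem apply_mul_smul_sq_le {L : Module.Dual ℝ V} {m : V} (hm : ∀ a : R, 0 ≤ L (a ^ 2 • m))
    (a b : R) : L ((a * b) • m) ^ 2 ≤ L (a ^ 2 • m) * L (b ^ 2 • m) := by
  let B : LinearMap.BilinForm ℝ R := (LinearMap.mul ℝ R).compr₂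
    (L ∘ₗ (LinearMap.toSpanSingleton R V m).restrictScalars ℝ)
  have hB (x y : R) : B x y = L ((x * y) • m) := rfl
  have hcs := B.apply_sq_le_of_symm (fun x => by rw [hB, ← sq]; exact hm x)
    ⟨fun x y => by rw [RingHom.id_apply, hB, hB, mul_comm]⟩ a b
  simpa only [hB, ← sq] using hcs

variable {M : PointedCone ℝ V} {u : V} {L : Module.Dual ℝ V}

theorem apply_pow_sq_smul_le_pow (hsq : ∀ a : R, ∀ m ∈ M, a ^ 2 • m ∈ M) (hL : L ∈ stateSet M u)
    {a : R} {K : ℝ} (hK : 0 ≤ K) (ha : K • u - a ^ 2 • u ∈ M) (j : ℕ) :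
    L ((a ^ j) ^ 2 • u) ≤ K ^ j := by
  induction j with
  | zero => simp [hL.2]
  | succ j ih =>
    have hnonneg := hL.1 _ (hsq (a ^ j) _ ha)
    rw [smul_sub, smul_comm, smul_smul, ← mul_pow, ← pow_succ, map_sub, map_smul, smul_eq_mul]
      at hnonneg
    calc L ((a ^ (j + 1)) ^ 2 • u) ≤ K * L ((a ^ j) ^ 2 • u) := by linarith
      _ ≤ K * K ^ j := by gcongr
      _ = K ^ (j + 1) := (pow_succ' K j).symm

-- `(K - a ^ 2) • m` need not lie in `M`. Instead, `j ↦ L ((a ^ j) ^ 2 • m)` is log-convex by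
-- Cauchy–Schwarz and grows at most like `K ^ j` because `m` is dominated by the order unit.
theorem apply_sq_smul_le (hu : IsOrderUnit M u) (hsq : ∀ a : R, ∀ m ∈ M, a ^ 2 • m ∈ M)
    (hL : L ∈ stateSet M u) {a : R} {K : ℝ} (hK : 0 < K) (ha : K • u - a ^ 2 • u ∈ M)
    {m : V} (hm : m ∈ M) : L (a ^ 2 • m) ≤ K * L m := by
  have hnonneg (b : R) : 0 ≤ L (b ^ 2 • m) := hL.1 _ (hsq b m hm)
  obtain ⟨N, hN, hNm⟩ := hu.exists_pos_smul_sub_mem m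
  have hgrowth (j : ℕ) : L ((a ^ j) ^ 2 • m) ≤ N * K ^ j := by
    have h := hL.1 _ (hsq (a ^ j) _ hNm)
    rw [smul_sub, smul_comm, map_sub, map_smul, smul_eq_mul] at h
    calc L ((a ^ j) ^ 2 • m) ≤ N * L ((a ^ j) ^ 2 • u) := by linarith
      _ ≤ N * K ^ j := by gcongr; exact apply_pow_sq_smul_le_pow hsq hL hK.le ha j
  have hlog (j : ℕ) : L ((a ^ (j + 1)) ^ 2 • m) ^ 2
      ≤ L ((a ^ j) ^ 2 • m) * L ((a ^ (j + 2)) ^ 2 • m) := by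
    convert apply_mul_smul_sq_le hnonneg (a ^ j) (a ^ (j + 2)) using 4
    ring
  simpa using apply_one_le_of_sq_le_mul hK (fun j => hnonneg (a ^ j)) hlog hgrowth

theorem apply_sq_smul_of_mem_extremePoints (hu : IsOrderUnit M u)
    (hsq : ∀ a : R, ∀ m ∈ M, a ^ 2 • m ∈ M) (hL : L ∈ (stateSet M u).extremePoints ℝ)
    (a : R) (v : V) : L (a ^ 2 • v) = L (a ^ 2 • u) * L v := by
  obtain ⟨K, hK, ha⟩ := hu.exists_pos_smul_sub_mem (a ^ 2 • u)
  exact LinearMap.congr_fun (eq_apply_smul_of_le hu.1 hL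
    (A := L ∘ₗ (LinearMap.lsmul R V (a ^ 2)).restrictScalars ℝ)
    (fun m hm => hL.1.1 _ (hsq a m hm)) fun m hm => apply_sq_smul_le hu hsq hL.1 hK ha hm) v

theorem apply_smul_of_mem_extremePoints (hu : IsOrderUnit M u)
    (hsq : ∀ a : R, ∀ m ∈ M, a ^ 2 • m ∈ M) (hL : L ∈ (stateSet M u).extremePoints ℝ)
    (a : R) (v : V) : L (a • v) = L (a • u) * L v := by
  have hpolar (w : V) : (4 : ℝ) • a • w = (a + 1) ^ 2 • w - (a - 1) ^ 2 • w := by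
    rw [← sub_smul, ← algebraMap_smul R (4 : ℝ), smul_smul, map_ofNat]
    ring_nf
  have happly (w : V) : 4 * L (a • w) = L ((a + 1) ^ 2 • w) - L ((a - 1) ^ 2 • w) := by
    rw [← smul_eq_mul, ← map_smul, hpolar, map_sub]
  have hv := happly v
  rw [apply_sq_smul_of_mem_extremePoints hu hsq hL (a + 1),
    apply_sq_smul_of_mem_extremePoints hu hsq hL (a - 1)] at hv
  linear_combination hv / 4 - L v * happly u / 4

theorem exists_mem_stateSet_apply_smul (hu : IsOrderUnit M u)
    (hsq : ∀ a : R, ∀ m ∈ M, a ^ 2 • m ∈ M) {f : V} (hf : f ∉ M) :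
    ∃ L ∈ stateSet M u, L f ≤ 0 ∧ ∃ φ : R →ₐ[ℝ] ℝ, ∀ a v, L (a • v) = φ a * L v := by
  obtain ⟨L, hL, hLf⟩ := exists_mem_extremePoints_stateSet_apply_nonpos hu hf
  have hmul := apply_smul_of_mem_extremePoints hu hsq hL
  refine ⟨L, hL.1, hLf, AlgHom.ofLinearMap
    (L ∘ₗ (LinearMap.toSpanSingleton R V u).restrictScalars ℝ) ?_ fun a b => ?_, hmul⟩
  · simpa using hL.1.2
  · simp [mul_smul, hmul a (b • u)]

end SquareClosed

section RealMatrix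

variable {ι : Type*} [Finite ι] [DecidableEq ι] {A : Matrix ι ι ℝ}

open scoped MatrixOrder Matrix.Norms.L2Operator in
theorem exists_pos_posSemidef_sub_smul_one [Nonempty ι] (hA : A.PosDef) :
    ∃ r > (0 : ℝ), (A - r • 1).PosSemidef := by
  cases nonempty_fintype ι
  obtain ⟨r, hr, hrA⟩ := (CFC.exists_pos_algebraMap_le_iff hA.1).2
    fun _ hx => hA.isStrictlyPositive.spectrum_pos hx
  exact ⟨r, hr, by simpa [Algebra.algebraMap_eq_smul_one] using Matrix.le_iff.1 hrA⟩

theorem apply_pos_of_posDef {l : Matrix ι ι ℝ →ₗ[ℝ] ℝ} (hl : ∀ v, 0 ≤ l (vecMulVec v v))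
    (hl1 : l 1 = 1) (hA : A.PosDef) : 0 < l A := by
  have : Nonempty ι := by
    by_contra! hι
    exact zero_ne_one ((map_zero l).symm.trans ((congrArg l (Subsingleton.elim 0 1)).trans hl1))
  obtain ⟨r, hr, hrA⟩ := exists_pos_posSemidef_sub_smul_one hA
  obtain ⟨m, v, hv⟩ := posSemidef_iff_eq_sum_vecMulVec.1 hrA
  have hnonneg : 0 ≤ l (A - r • 1) := by
    rw [hv, map_sum]
    exact sum_nonneg fun i _ => hl (v i)
  rw [map_sub, map_smul, hl1, smul_eq_mul, mul_one, sub_nonneg] at hnonneg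
  exact hr.trans_le hnonneg

end RealMatrix

section QuadraticModule

variable {R ι κ : Type*} [CommRing R] {ρ : κ → Type*} [∀ j, Fintype (ρ j)]

/-- The scalar quadratic module `Q¹(H)` generated by the matrices `H j`: finite sums of terms `a²`
and `tᵀ (H j) t`. -/
def quadModule (H : ∀ j, Matrix (ρ j) (ρ j) R) : AddSubmonoid R :=
  AddSubmonoid.closure (Set.range (fun a => a ^ 2) ∪
    Set.range fun t : Σ j, ρ j → R => t.2 ⬝ᵥ H t.1 *ᵥ t.2)

/-- The matrix quadratic module `Q^p(H)`, for matrices indexed by `ι`: finite sums of terms `v vᵀ`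
and `Tᵀ (H j) T`. -/
def matQuadModule (ι : Type*) (H : ∀ j, Matrix (ρ j) (ρ j) R) : AddSubmonoid (Matrix ι ι R) :=
  AddSubmonoid.closure (Set.range (fun v => vecMulVec v v) ∪
    Set.range fun T : Σ j, Matrix (ρ j) ι R => T.2ᵀ * H T.1 * T.2)

variable {H : ∀ j, Matrix (ρ j) (ρ j) R}

theorem sq_mem_quadModule (a : R) : a ^ 2 ∈ quadModule H :=
  AddSubmonoid.subset_closure (Or.inl ⟨a, rfl⟩)

theorem dotProduct_mulVec_mem_quadModule (j : κ) (t : ρ j → R) : t ⬝ᵥ H j *ᵥ t ∈ quadModule H :=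
  AddSubmonoid.subset_closure (Or.inr ⟨⟨j, t⟩, rfl⟩)

theorem sq_mul_mem_quadModule (a : R) {q : R} (hq : q ∈ quadModule H) :
    a ^ 2 * q ∈ quadModule H := by
  induction hq using AddSubmonoid.closure_induction with
  | mem q hq =>
    rcases hq with ⟨b, rfl⟩ | ⟨⟨j, t⟩, rfl⟩
    · exact mul_pow a b 2 ▸ sq_mem_quadModule (a * b)
    · convert dotProduct_mulVec_mem_quadModule j (a • t) using 1
      simp only [mulVec_smul, smul_dotProduct, dotProduct_smul, smul_eq_mul]
      ring
  | zero => simp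
  | add p q _ _ hp hq => exact mul_add (a ^ 2) p q ▸ add_mem hp hq

theorem trace_transpose_mul_self_mul {m n : Type*} [Fintype m] [Fintype n] (T : Matrix m n R)
    (B : Matrix n n R) : trace ((Tᵀ * T)ᵀ * B) = ∑ i, T.row i ⬝ᵥ B *ᵥ T.row i := by
  rw [transpose_mul, transpose_transpose, Matrix.mul_assoc, trace_mul_comm, trace]
  refine sum_congr rfl fun i _ => ?_
  rw [diag_apply, Matrix.mul_apply', Matrix.mul_apply_eq_vecMul, dotProduct_mulVec]
  rfl

theorem vecMulVec_self_mem_matQuadModule (v : ι → R) : vecMulVec v v ∈ matQuadModule ι H :=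
  AddSubmonoid.subset_closure (Or.inl ⟨v, rfl⟩)

theorem transpose_mul_mul_mem_matQuadModule (j : κ) (T : Matrix (ρ j) ι R) :
    Tᵀ * H j * T ∈ matQuadModule ι H :=
  AddSubmonoid.subset_closure (Or.inr ⟨⟨j, T⟩, rfl⟩)

theorem sq_smul_mem_matQuadModule (a : R) {G : Matrix ι ι R} (hG : G ∈ matQuadModule ι H) :
    a ^ 2 • G ∈ matQuadModule ι H := by
  induction hG using AddSubmonoid.closure_induction with
  | mem G hG =>
    rcases hG with ⟨v, rfl⟩ | ⟨⟨j, T⟩, rfl⟩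
    · convert vecMulVec_self_mem_matQuadModule (a • v) using 1
      simp only [smul_vecMulVec, vecMulVec_smul, smul_smul, sq]
    · convert transpose_mul_mul_mem_matQuadModule j (a • T) using 1
      simp only [transpose_smul, Matrix.smul_mul, Matrix.mul_smul, smul_smul, sq]
  | zero => simp
  | add G G' _ _ hG hG' => exact smul_add (a ^ 2) G G' ▸ add_mem hG hG'

theorem isSymm_of_mem_matQuadModule (hH : ∀ j, (H j).IsSymm) {G : Matrix ι ι R}
    (hG : G ∈ matQuadModule ι H) : G.IsSymm := by
  induction hG using AddSubmonoid.closure_induction with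
  | mem G hG =>
    rcases hG with ⟨v, rfl⟩ | ⟨⟨j, T⟩, rfl⟩
    · exact transpose_vecMulVec v v
    · simp only [IsSymm, transpose_mul, transpose_transpose, (hH j).eq, Matrix.mul_assoc]
  | zero => exact isSymm_zero
  | add _ _ _ _ hG hG' => exact hG.add hG'

theorem vecMulVec_transpose_mul_mul {n : Type*} [Fintype n] (t : n → R) (B : Matrix n n R)
    (v : ι → R) : (vecMulVec t v)ᵀ * B * vecMulVec t v = (t ⬝ᵥ B *ᵥ t) • vecMulVec v v := by
  rw [transpose_vecMulVec, Matrix.mul_assoc, mul_vecMulVec, vecMulVec_mul_vecMulVec,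
    vecMulVec_smul]

theorem smul_vecMulVec_self_mem_matQuadModule {q : R} (hq : q ∈ quadModule H) (v : ι → R) :
    q • vecMulVec v v ∈ matQuadModule ι H := by
  induction hq using AddSubmonoid.closure_induction with
  | mem q hq =>
    rcases hq with ⟨a, rfl⟩ | ⟨⟨j, t⟩, rfl⟩
    · exact sq_smul_mem_matQuadModule a (vecMulVec_self_mem_matQuadModule v)
    · exact vecMulVec_transpose_mul_mul t (H j) v ▸
        transpose_mul_mul_mem_matQuadModule j (vecMulVec t v)
  | zero => simp
  | add p q _ _ hp hq => exact add_smul p q (vecMulVec v v) ▸ add_mem hp hq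

theorem smul_one_mem_matQuadModule [Finite ι] [DecidableEq ι] {q : R} (hq : q ∈ quadModule H) :
    q • 1 ∈ matQuadModule ι H := by
  cases nonempty_fintype ι
  rw [← sum_single_one, smul_sum]
  refine sum_mem fun i _ => ?_
  rw [single_eq_single_vecMulVec_single]
  exact smul_vecMulVec_self_mem_matQuadModule hq _

theorem one_sub_single_mem_matQuadModule [Finite ι] [DecidableEq ι] (i : ι) :
    1 - single i i 1 ∈ matQuadModule ι H := by
  cases nonempty_fintype ι
  rw [← sum_single_one, ← add_sum_erase _ _ (mem_univ i), add_sub_cancel_left]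
  refine sum_mem fun m _ => ?_
  rw [single_eq_single_vecMulVec_single]
  exact vecMulVec_self_mem_matQuadModule _

end QuadraticModule

section RealAlgebra

variable {R ι κ : Type*} [CommRing R] [Algebra ℝ R] {ρ : κ → Type*} [∀ j, Fintype (ρ j)]
  {H : ∀ j, Matrix (ρ j) (ρ j) R}

/-- The elements of `R` that are bounded with respect to `quadModule H`, boundedness being
expressed by `k - a² ∈ Q¹(H)`. The quadratic module is Archimedean when this is all of `R`. -/
def boundedSubalgebra (H : ∀ j, Matrix (ρ j) (ρ j) R) : Subalgebra ℝ R where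
  carrier := {a | ∃ k : ℝ, 0 ≤ k ∧ algebraMap ℝ R k - a ^ 2 ∈ quadModule H}
  algebraMap_mem' r := ⟨r ^ 2, sq_nonneg r, by simp⟩
  add_mem' := by
    rintro a b ⟨k, hk, hka⟩ ⟨l, hl, hlb⟩
    refine ⟨2 * k + 2 * l, by positivity, ?_⟩
    convert add_mem (add_mem (nsmul_mem hka 2) (nsmul_mem hlb 2)) (sq_mem_quadModule (a - b))
      using 1
    simp only [map_add, map_mul, map_ofNat]
    ring
  mul_mem' := by
    rintro a b ⟨k, hk, hka⟩ ⟨l, hl, hlb⟩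
    refine ⟨k * l, by positivity, ?_⟩
    convert add_mem (nonneg_smul_mem_of_sq_smul_mem (fun c _ h => sq_mul_mem_quadModule c h) hk hlb)
      (sq_mul_mem_quadModule b hka) using 1
    rw [Algebra.smul_def, map_mul]
    ring

theorem nonneg_smul_mem_matQuadModule {G : Matrix ι ι R} {c : ℝ} (hc : 0 ≤ c)
    (hG : G ∈ matQuadModule ι H) : c • G ∈ matQuadModule ι H :=
  nonneg_smul_mem_of_sq_smul_mem (fun a _ h => sq_smul_mem_matQuadModule a h) hc hG

/-- The cone of the matrices whose symmetric part lies in the matrix quadratic module. It replaces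
`matQuadModule`, which contains only symmetric matrices if the `H j` are symmetric, so that the
identity can be an order unit of the `R`-module of all matrices. -/
def symPartCone (ι : Type*) (H : ∀ j, Matrix (ρ j) (ρ j) R) : PointedCone ℝ (Matrix ι ι R) where
  carrier := {G | G + Gᵀ ∈ matQuadModule ι H}
  zero_mem' := by simp
  add_mem' {G G'} hG hG' := by
    rw [Set.mem_ofPred_eq, transpose_add, add_add_add_comm]
    exact add_mem hG hG'
  smul_mem' c G hG := by
    have hc : (c : ℝ) • (G + Gᵀ) ∈ matQuadModule ι H := nonneg_smul_mem_matQuadModule c.2 hG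
    rwa [smul_add, ← transpose_smul] at hc

variable {G : Matrix ι ι R}

theorem mem_symPartCone : G ∈ symPartCone ι H ↔ G + Gᵀ ∈ matQuadModule ι H :=
  Iff.rfl

theorem mem_symPartCone_of_mem_matQuadModule (hH : ∀ j, (H j).IsSymm)
    (hG : G ∈ matQuadModule ι H) : G ∈ symPartCone ι H := by
  rw [mem_symPartCone, (isSymm_of_mem_matQuadModule hH hG).eq]
  exact add_mem hG hG

theorem mem_matQuadModule_of_mem_symPartCone (hGs : G.IsSymm) (hG : G ∈ symPartCone ι H) :
    G ∈ matQuadModule ι H := by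
  rw [mem_symPartCone, hGs.eq] at hG
  convert nonneg_smul_mem_matQuadModule (c := 2⁻¹) (by norm_num) hG using 1
  module

theorem sq_smul_mem_symPartCone (a : R) (hG : G ∈ symPartCone ι H) :
    a ^ 2 • G ∈ symPartCone ι H := by
  rw [mem_symPartCone, transpose_smul, ← smul_add]
  exact sq_smul_mem_matQuadModule a hG

theorem smul_one_add_single_add_single_mem_matQuadModule [Finite ι] [DecidableEq ι] (i j : ι)
    {a : R} {k : ℝ} (hk : 0 ≤ k) (ha : algebraMap ℝ R k - a ^ 2 ∈ quadModule H) :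
    (1 + k) • 1 + single i j a + single j i a ∈ matQuadModule ι H := by
  have hsplit : (1 + k) • 1 + single i j a + single j i a =
      vecMulVec (Pi.single i 1 + a • Pi.single j 1) (Pi.single i 1 + a • Pi.single j 1) +
        (algebraMap ℝ R k - a ^ 2) • vecMulVec (Pi.single j 1) (Pi.single j 1) +
        (1 - single i i 1) + k • (1 - single j j 1) := by
    have hsingle (l m : ι) : single l m a = a • vecMulVec (Pi.single l 1) (Pi.single m 1) := by
      rw [← single_eq_single_vecMulVec_single, smul_single, smul_eq_mul, mul_one]
    rw [hsingle, hsingle]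
    simp only [single_eq_single_vecMulVec_single, add_vecMulVec, vecMulVec_add, smul_vecMulVec,
      vecMulVec_smul, sub_smul, algebraMap_smul]
    module
  rw [hsplit]
  exact add_mem (add_mem (add_mem (vecMulVec_self_mem_matQuadModule _)
    (smul_vecMulVec_self_mem_matQuadModule ha _)) (one_sub_single_mem_matQuadModule i))
    (nonneg_smul_mem_matQuadModule hk (one_sub_single_mem_matQuadModule j))

theorem one_mem_symPartCone [Finite ι] [DecidableEq ι] (hH : ∀ j, (H j).IsSymm) :
    1 ∈ symPartCone ι H := by
  refine mem_symPartCone_of_mem_matQuadModule hH ?_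
  simpa using smul_one_mem_matQuadModule (ι := ι) (sq_mem_quadModule (H := H) 1)

theorem isOrderUnit_one_symPartCone [Finite ι] [DecidableEq ι] (hH : ∀ j, (H j).IsSymm)
    (hbdd : boundedSubalgebra H = ⊤) : IsOrderUnit (symPartCone ι H) 1 := by
  refine ⟨one_mem_symPartCone hH, fun G => ?_⟩
  induction G using Matrix.induction_on' with
  | h_zero => exact ⟨0, by simp⟩
  | h_add G G' hG hG' =>
    obtain ⟨N, hN⟩ := hG
    obtain ⟨N', hN'⟩ := hG'
    refine ⟨N + N', ?_⟩
    convert add_mem hN hN' using 1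
    module
  | h_std_basis i j a =>
    obtain ⟨k, hk, ha⟩ : a ∈ boundedSubalgebra H := hbdd ▸ Algebra.mem_top
    refine ⟨(1 + k) / 2, ?_⟩
    rw [mem_symPartCone]
    convert smul_one_add_single_add_single_mem_matQuadModule i j hk ha using 1
    simp only [transpose_add, transpose_smul, transpose_one, transpose_single]
    module

theorem map_posSemidef_of_nonneg_on_quadModule (hH : ∀ j, (H j).IsSymm) {φ : R →ₐ[ℝ] ℝ}
    (hφ : ∀ q ∈ quadModule H, 0 ≤ φ q) (j : κ) : ((H j).map φ).PosSemidef := by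
  refine .of_dotProduct_mulVec_nonneg ((hH j).map φ) fun y => ?_
  simpa [dotProduct, mulVec] using
    hφ _ (dotProduct_mulVec_mem_quadModule j (algebraMap ℝ R ∘ y))

theorem apply_eq_apply_map_map_algebraMap [Finite ι]
    {L : Module.Dual ℝ (Matrix ι ι R)} {φ : R →ₐ[ℝ] ℝ} (hL : ∀ a G, L (a • G) = φ a * L G)
    (G : Matrix ι ι R) : L G = L ((G.map φ).map (algebraMap ℝ R)) := by
  classical
  induction G using Matrix.induction_on' with
  | h_zero => simp
  | h_add G G' hG hG' =>
    rw [Matrix.map_add _ (map_add φ), Matrix.map_add _ (map_add _), map_add, map_add, hG, hG']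
  | h_std_basis i j a =>
    have hsingle (b : R) : L (single i j b) = φ b * L (single i j 1) := by
      rw [← hL, smul_single, smul_eq_mul, mul_one]
    rw [map_single, map_single, hsingle, hsingle (algebraMap ℝ R _), AlgHom.commutes,
      Algebra.algebraMap_self_apply]

theorem apply_pos_of_map_posDef [Finite ι] [DecidableEq ι] {L : Module.Dual ℝ (Matrix ι ι R)}
    {φ : R →ₐ[ℝ] ℝ} (hL : ∀ a G, L (a • G) = φ a * L G) (hL1 : L 1 = 1)
    (hLv : ∀ v : ι → R, 0 ≤ L (vecMulVec v v)) {F : Matrix ι ι R} (hF : (F.map φ).PosDef) :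
    0 < L F := by
  let l : Matrix ι ι ℝ →ₗ[ℝ] ℝ := L ∘ₗ (Algebra.linearMap ℝ R).mapMatrix
  have hl (A : Matrix ι ι ℝ) : l A = L (A.map (algebraMap ℝ R)) := rfl
  rw [apply_eq_apply_map_map_algebraMap hL, ← hl]
  refine apply_pos_of_posDef (fun v => ?_) ?_ hF
  · convert hLv (algebraMap ℝ R ∘ v) using 1
    rw [hl]
    congr 1
    ext1 i j
    simp [vecMulVec_apply]
  · simpa [hl] using hL1

theorem scherer_hol_multi_general [Finite ι] (hH : ∀ j, (H j).IsSymm)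
    (hbdd : boundedSubalgebra H = ⊤) {F : Matrix ι ι R} (hF : F.IsSymm)
    (hpd : ∀ φ : R →ₐ[ℝ] ℝ, (∀ j, ((H j).map φ).PosSemidef) → (F.map φ).PosDef) :
    F ∈ matQuadModule ι H := by
  classical
  refine mem_matQuadModule_of_mem_symPartCone hF ?_
  by_contra hFM
  obtain ⟨L, ⟨hLM, hL1⟩, hLF, φ, hLφ⟩ := exists_mem_stateSet_apply_smul
    (isOrderUnit_one_symPartCone hH hbdd) (fun a G hG => sq_smul_mem_symPartCone a hG) hFM
  have hLQ (G) (hG : G ∈ matQuadModule ι H) : 0 ≤ L G :=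
    hLM G (mem_symPartCone_of_mem_matQuadModule hH hG)
  have hφ (q) (hq : q ∈ quadModule H) : 0 ≤ φ q := by
    simpa [hLφ, hL1] using hLQ _ (smul_one_mem_matQuadModule hq)
  exact hLF.not_gt <| apply_pos_of_map_posDef hLφ hL1
    (fun v => hLQ _ (vecMulVec_self_mem_matQuadModule v))
    (hpd φ (map_posSemidef_of_nonneg_on_quadModule hH hφ))

end RealAlgebra

section SumsOfSquares

variable {σ ι : Type*}

theorem IsSOSMatrix.zero [Fintype ι] : IsSOSMatrix (0 : Matrix ι ι (MvPolynomial σ ℝ)) :=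
  ⟨0, 0, by simp⟩

theorem IsSOSMatrix.vecMulVec_self [Fintype ι] (v : ι → MvPolynomial σ ℝ) :
    IsSOSMatrix (vecMulVec v v) :=
  ⟨1, replicateRow (Fin 1) v, vecMulVec_eq (Fin 1) v v⟩

theorem IsSOSMatrix.add [Fintype ι] {A B : Matrix ι ι (MvPolynomial σ ℝ)} (hA : IsSOSMatrix A)
    (hB : IsSOSMatrix B) : IsSOSMatrix (A + B) := by
  obtain ⟨l, S, rfl⟩ := hA
  obtain ⟨m, T, rfl⟩ := hB
  refine ⟨l + m, (fromRows S T).submatrix finSumFinEquiv.symm id, ?_⟩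
  rw [transpose_submatrix, submatrix_mul_equiv, transpose_fromRows, fromCols_mul_fromRows,
    submatrix_id_id]

theorem lram_add {R ιp ιq : Type*} [CommSemiring R] [Fintype ιq]
    (A A' : Matrix (ιp × ιq) (ιp × ιq) R) (B : Matrix ιq ιq R) :
    lram (A + A') B = lram A B + lram A' B := by
  ext1 i j
  simp [lram, add_mul, sum_add_distrib]

theorem lram_zero {R ιp ιq : Type*} [CommSemiring R] [Fintype ιq] (B : Matrix ιq ιq R) :
    lram (0 : Matrix (ιp × ιq) (ιp × ιq) R) B = 0 := by
  ext1 i j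
  simp [lram]

theorem lram_vecMulVec {R ιp ιq : Type*} [CommSemiring R] [Fintype ιq] (T : Matrix ιq ιp R)
    {B : Matrix ιq ιq R} (hB : B.IsSymm) :
    lram (vecMulVec (fun a => T a.2 a.1) fun a => T a.2 a.1) B = Tᵀ * B * T := by
  ext1 i j
  simp only [lram, of_apply, vecMulVec_apply, Matrix.mul_apply, transpose_apply, sum_mul]
  rw [sum_comm]
  refine sum_congr rfl fun a _ => sum_congr rfl fun b _ => ?_
  rw [← hB.apply a b]
  ring

variable {κ : Type*} {ρ : κ → Type*} [∀ j, Fintype (ρ j)]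
  {H : ∀ j, Matrix (ρ j) (ρ j) (MvPolynomial σ ℝ)}

theorem exists_sos_of_mem_matQuadModule [Fintype ι] [Fintype κ] (hH : ∀ j, (H j).IsSymm)
    {G : Matrix ι ι (MvPolynomial σ ℝ)} (hG : G ∈ matQuadModule ι H) :
    ∃ (S0 : Matrix ι ι (MvPolynomial σ ℝ))
      (Sg : ∀ j, Matrix (ι × ρ j) (ι × ρ j) (MvPolynomial σ ℝ)),
      IsSOSMatrix S0 ∧ (∀ j, IsSOSMatrix (Sg j)) ∧ G = S0 + ∑ j, lram (Sg j) (H j) := by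
  classical
  induction hG using AddSubmonoid.closure_induction with
  | mem G hG =>
    rcases hG with ⟨v, rfl⟩ | ⟨⟨j, T⟩, rfl⟩
    · exact ⟨_, 0, .vecMulVec_self v, fun j => .zero, by simp [lram_zero]⟩
    · refine ⟨0, Pi.single j (vecMulVec (fun a => T a.2 a.1) fun a => T a.2 a.1), .zero,
        fun i => ?_, ?_⟩
      · obtain rfl | hi := eq_or_ne i j
        · rw [Pi.single_eq_same]
          exact .vecMulVec_self _
        · rw [Pi.single_eq_of_ne hi]
          exact .zero
      · rw [Fintype.sum_eq_single j fun i hi => by rw [Pi.single_eq_of_ne hi, lram_zero],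
          Pi.single_eq_same, lram_vecMulVec T (hH j), zero_add]
  | zero => exact ⟨0, 0, .zero, fun j => .zero, by simp [lram_zero]⟩
  | add _ _ _ _ hG hG' =>
    obtain ⟨S0, Sg, hS0, hSg, rfl⟩ := hG
    obtain ⟨T0, Tg, hT0, hTg, rfl⟩ := hG'
    refine ⟨S0 + T0, Sg + Tg, hS0.add hT0, fun j => (hSg j).add (hTg j), ?_⟩
    simp only [Pi.add_apply, lram_add, sum_add_distrib]
    abel

theorem IsSOSPoly.mem_quadModule {f : MvPolynomial σ ℝ} (hf : IsSOSPoly f) : f ∈ quadModule H := by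
  obtain ⟨l, g, rfl⟩ := hf
  exact sum_mem fun i _ => sq_mem_quadModule (g i)

theorem IsSOSMatrix.trace_mul_mem_quadModule {j : κ} {S : Matrix (ρ j) (ρ j) (MvPolynomial σ ℝ)}
    (hS : IsSOSMatrix S) : trace (Sᵀ * H j) ∈ quadModule H := by
  obtain ⟨l, T, rfl⟩ := hS
  rw [trace_transpose_mul_self_mul]
  exact sum_mem fun i _ => dotProduct_mulVec_mem_quadModule j (T.row i)

theorem boundedSubalgebra_eq_top [Fintype σ] {c : ℝ} (hc : 0 ≤ c)
    (hmem : C c - ∑ i, X i ^ 2 ∈ quadModule H) : boundedSubalgebra H = ⊤ := by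
  classical
  rw [eq_top_iff, ← MvPolynomial.adjoin_range_X, Algebra.adjoin_le_iff]
  rintro _ ⟨i, rfl⟩
  refine ⟨c, hc, ?_⟩
  have hrest : ∑ m ∈ univ.erase i, (X m : MvPolynomial σ ℝ) ^ 2 ∈ quadModule H :=
    sum_mem fun m _ => sq_mem_quadModule (X m)
  convert add_mem hmem hrest using 1
  rw [← add_sum_erase _ _ (mem_univ i), algebraMap_eq]
  ring

theorem map_eq_evalMat (φ : MvPolynomial σ ℝ →ₐ[ℝ] ℝ) (M : Matrix ι ι (MvPolynomial σ ℝ)) :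
    M.map φ = evalMat (fun i => φ (X i)) M := by
  congr 1
  exact congrArg DFunLike.coe (aeval_unique φ)

end SumsOfSquares

/-- multi-constraint Scherer–Hol Positivstellensatz. -/
theorem scherer_hol_multi {n p t : ℕ} (r : Fin t → ℕ)
    (H : ∀ j, Matrix (Fin (r j)) (Fin (r j)) (MvPolynomial (Fin n) ℝ))
    (hHs : ∀ j, (H j).IsSymm)
    (hK : IsCompact {x : Fin n → ℝ | ∀ j, (evalMat x (H j)).PosSemidef})
    (harch : ∃ C > (0 : ℝ), ∃ σ₀ : MvPolynomial (Fin n) ℝ, IsSOSPoly σ₀ ∧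
      ∃ Sg : ∀ j, Matrix (Fin (r j)) (Fin (r j)) (MvPolynomial (Fin n) ℝ),
        (∀ j, IsSOSMatrix (Sg j)) ∧
        MvPolynomial.C C - ∑ i, (X i : MvPolynomial (Fin n) ℝ) ^ 2 =
          σ₀ + ∑ j, Matrix.trace ((Sg j)ᵀ * H j))
    (F : Matrix (Fin p) (Fin p) (MvPolynomial (Fin n) ℝ)) (hFs : F.IsSymm)
    (hpd : ∀ x : Fin n → ℝ,
      (∀ j, (evalMat x (H j)).PosSemidef) → (evalMat x F).PosDef) :
    ∃ (S0 : Matrix (Fin p) (Fin p) (MvPolynomial (Fin n) ℝ))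
      (Sg : ∀ j, Matrix (Fin p × Fin (r j)) (Fin p × Fin (r j)) (MvPolynomial (Fin n) ℝ)),
      IsSOSMatrix S0 ∧ (∀ j, IsSOSMatrix (Sg j)) ∧
      F = S0 + ∑ j, lram (Sg j) (H j) := by
  obtain ⟨c, hc, σ₀, hσ₀, S, hS, hcS⟩ := harch
  have hmem : C c - ∑ i, X i ^ 2 ∈ quadModule H := by
    rw [hcS]
    exact add_mem hσ₀.mem_quadModule (sum_mem fun j _ => (hS j).trace_mul_mem_quadModule (H := H))
  refine exists_sos_of_mem_matQuadModule hHs <|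
    scherer_hol_multi_general hHs (boundedSubalgebra_eq_top hc.le hmem) hFs fun φ hφ => ?_
  simp only [map_eq_evalMat] at hφ ⊢
  exact hpd _ hφ
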